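/- arXiv:2201.10418 — 2 statements merged into one kernel-verified Lean document; each statement's English description precedes it below -/
import Mathlib

section
/- Let m ≥ 3. No strategyproof SDS that is 0-randomly dictatorial is β-ex post efficient for any β < 1/m; that is, for every such SDS f there exist a profile R and an alternative x that is Pareto-dominated in R such that f(R,x) ≥ 1/m. -/
open Finset

noncomputable section

/-- A preference profile: each voter's strict linear order on the `m`
alternatives is encoded as a ranking permutation, where `R i x` is the rank of
alternative `x` for voter `i` (rank `0` = most preferred). Voter `i` strictly
prefers `x` to `y` iff `R i x < R i y`. -/
abbrev Profile (n m : ℕ) := Fin n → Equiv.Perm (Fin m)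

/-- `F R x` is the probability that the social decision scheme `F` assigns to
alternative `x` at profile `R`; `IsSDS F` says every `F R` is a lottery. -/
def IsSDS {n m : ℕ} (F : Profile n m → Fin m → ℝ) : Prop :=
  (∀ R x, 0 ≤ F R x) ∧ ∀ R, ∑ x, F R x = 1

/-- Stochastic-dominance preference of voter `i` (with preferences as in `R`):
lottery `p` is weakly preferred to lottery `q`. -/
def SDPref {n m : ℕ} (R : Profile n m) (i : Fin n) (p q : Fin m → ℝ) : Prop :=
  ∀ x : Fin m,
    ∑ y ∈ univ.filter (fun y => R i y < R i x), q y ≤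
      ∑ y ∈ univ.filter (fun y => R i y < R i x), p y

/-- Strategyproofness: the truthful outcome is SD-preferred to any outcome
obtainable by a unilateral deviation. -/
def Strategyproof {n m : ℕ} (F : Profile n m → Fin m → ℝ) : Prop :=
  ∀ (R R' : Profile n m) (i : Fin n),
    (∀ j, j ≠ i → R j = R' j) → SDPref R i (F R) (F R')

/-- Anonymity: permuting the voters does not change the outcome. -/
def Anonymous {n m : ℕ} (F : Profile n m → Fin m → ℝ) : Prop :=
  ∀ (π : Equiv.Perm (Fin n)) (R : Profile n m), F (fun i => R (π i)) = F R

/-- The profile obtained from `R` by relabeling the alternatives by `τ`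
(in `relabel τ R`, alternative `τ x` gets the rank that `x` has in `R`). -/
def relabel {n m : ℕ} (τ : Equiv.Perm (Fin m)) (R : Profile n m) : Profile n m :=
  fun i => τ.symm.trans (R i)

/-- Neutrality: relabeling the alternatives permutes the outcome accordingly. -/
def Neutral {n m : ℕ} (F : Profile n m → Fin m → ℝ) : Prop :=
  ∀ (τ : Equiv.Perm (Fin m)) (R : Profile n m) (x : Fin m),
    F (relabel τ R) (τ x) = F R x

/-- The supporting size `n_{xy}(R)`: the number of voters preferring `x` to `y`. -/
def suppSize {n m : ℕ} (R : Profile n m) (x y : Fin m) : ℕ :=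
  (univ.filter (fun i => R i x < R i y)).card

/-- `x` is the Condorcet winner of `R`. -/
def CondorcetWinner {n m : ℕ} (R : Profile n m) (x : Fin m) : Prop :=
  ∀ y, y ≠ x → suppSize R y x < suppSize R x y

/-- `α`-Condorcet-consistency. -/
def CondorcetConsistent {n m : ℕ} (F : Profile n m → Fin m → ℝ) (α : ℝ) : Prop :=
  ∀ R x, CondorcetWinner R x → α ≤ F R x

/-- `x` is Pareto-dominated in `R`. -/
def ParetoDominated {n m : ℕ} (R : Profile n m) (x : Fin m) : Prop :=
  ∃ y, ∀ i, R i y < R i x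

/-- `β`-ex post efficiency. -/
def ExPostEff {n m : ℕ} (F : Profile n m → Fin m → ℝ) (β : ℝ) : Prop :=
  ∀ R x, ParetoDominated R x → F R x ≤ β

/-- The probability that the dictatorial SDS of voter `i` assigns to `x`:
`1` if `x` is voter `i`'s most preferred alternative and `0` otherwise. -/
def dictProb {n m : ℕ} (R : Profile n m) (i : Fin n) (x : Fin m) : ℝ :=
  if ∀ y, R i x ≤ R i y then 1 else 0

/-- `d` is a random dictatorship. -/
def IsRandDict {n m : ℕ} (d : Profile n m → Fin m → ℝ) : Prop :=
  ∃ δ : Fin n → ℝ, (∀ i, 0 ≤ δ i) ∧ ∑ i, δ i = 1 ∧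
    ∀ R x, d R x = ∑ i, δ i * dictProb R i x

/-- `F` can be written as `γ d + (1 - γ) g` with `d` a random dictatorship and
`g` a strategyproof SDS. -/
def DecomposesAt {n m : ℕ} (F : Profile n m → Fin m → ℝ) (γ : ℝ) : Prop :=
  ∃ d g : Profile n m → Fin m → ℝ, IsRandDict d ∧ IsSDS g ∧ Strategyproof g ∧
    ∀ R x, F R x = γ * d R x + (1 - γ) * g R x

/-- `F` is `γ`-randomly dictatorial: `γ ∈ [0,1]` is the maximal value admitting
a decomposition `F = γ d + (1 - γ) g` as above. -/
def RandDictDegree {n m : ℕ} (F : Profile n m → Fin m → ℝ) (γ : ℝ) : Prop :=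
  0 ≤ γ ∧ γ ≤ 1 ∧ DecomposesAt F γ ∧
    ∀ γ', 0 ≤ γ' → γ' ≤ 1 → DecomposesAt F γ' → γ' ≤ γ

/-- The profile `R^{i:yx}` obtained from `R` by swapping `x` and `y` in voter
`i`'s preference relation (used when `x` is ranked directly above `y`). -/
def swapTop {n m : ℕ} (R : Profile n m) (i : Fin n) (x y : Fin m) : Profile n m :=
  Function.update R i ((R i).trans (Equiv.swap (R i x) (R i y)))

/-- The weight vector `b` defining the randomized Copeland rule:
`b k = 2/(m(m-1))` for `k > n/2`, `b k = 1/(m(m-1))` for `k = n/2`, `b k = 0`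
for `k < n/2`. -/
def copelandWeight (n m : ℕ) (k : ℕ) : ℝ :=
  if n < 2 * k then 2 / ((m : ℝ) * ((m : ℝ) - 1))
  else if 2 * k = n then 1 / ((m : ℝ) * ((m : ℝ) - 1))
  else 0

/-- The randomized Copeland rule `f_C(R, x) = ∑_{y ≠ x} b_{n_{xy}(R)}`. -/
def randCopeland (n m : ℕ) : Profile n m → Fin m → ℝ :=
  fun R x => ∑ y ∈ univ.filter (fun y => y ≠ x), copelandWeight n m (suppSize R x y)

/-- A point voting SDS, given by a scoring vector `a` (indexed by ranks
`0, …, m-1`, i.e. `a k` is the score of the `(k+1)`-st ranked alternative). -/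
structure PointVoting (n m : ℕ) where
  a : ℕ → ℝ
  mono : ∀ k l : ℕ, k ≤ l → l < m → a l ≤ a k
  nonneg : ∀ k : ℕ, k < m → 0 ≤ a k
  sum_eq : ∑ k ∈ Finset.range m, a k = 1 / (n : ℝ)

/-- The value of a point voting SDS. -/
def pvVal {n m : ℕ} (pv : PointVoting n m) : Profile n m → Fin m → ℝ :=
  fun R x => ∑ i, pv.a (R i x : ℕ)

/-- A supporting size SDS, given by a vector `b` indexed by supporting sizes
`0, …, n`. -/
structure SupportingSize (n m : ℕ) where
  b : ℕ → ℝ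
  mono : ∀ k l : ℕ, k ≤ l → l ≤ n → b k ≤ b l
  nonneg : ∀ k : ℕ, k ≤ n → 0 ≤ b k
  pair_eq : ∀ k : ℕ, k ≤ n → b k + b (n - k) = 2 / ((m : ℝ) * ((m : ℝ) - 1))

/-- The value of a supporting size SDS. -/
def ssVal {n m : ℕ} (S : SupportingSize n m) : Profile n m → Fin m → ℝ :=
  fun R x => ∑ y ∈ univ.filter (fun y => y ≠ x), S.b (suppSize R x y)

/-- A duple: a strategyproof SDS that puts positive probability on at most two
fixed alternatives. -/
def IsDuple {n m : ℕ} (g : Profile n m → Fin m → ℝ) : Prop :=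
  IsSDS g ∧ Strategyproof g ∧ ∃ x y : Fin m, ∀ R z, z ≠ x → z ≠ y → g R z = 0

/-- A unilateral: a strategyproof SDS that depends only on the preferences of a
single fixed voter. -/
def IsUnilateral {n m : ℕ} (g : Profile n m → Fin m → ℝ) : Prop :=
  IsSDS g ∧ Strategyproof g ∧
    ∃ i : Fin n, ∀ R R' : Profile n m, R i = R' i → g R = g R'

/-- `F` is a convex combination of SDSs satisfying the property `P`. -/
def MixOf {n m : ℕ} (P : (Profile n m → Fin m → ℝ) → Prop)
    (F : Profile n m → Fin m → ℝ) : Prop :=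
  ∃ (K : ℕ) (w : Fin K → ℝ) (g : Fin K → Profile n m → Fin m → ℝ),
    (∀ k, 0 ≤ w k) ∧ ∑ k, w k = 1 ∧ (∀ k, P (g k)) ∧
    ∀ R x, F R x = ∑ k, w k * g k R x

/-- The uniform random dictatorship. -/
def uniformRD (n m : ℕ) : Profile n m → Fin m → ℝ :=
  fun R x => (1 / (n : ℝ)) * ∑ i, dictProb R i x

/-- The uniform lottery. -/
def uniformLottery (n m : ℕ) : Profile n m → Fin m → ℝ :=
  fun _ _ => 1 / (m : ℝ)

/-!
Fix a voter `i` and the reports of the others. The largest probability `W V` that `i` can secure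
for a set `V` of alternatives is a submodular function of `V`. Write `curv U x y W` for its negated
second difference. Strategyproofness makes `curv U x y W - curv ∅ x y W` independent of the other
voters, so each voter has a well-defined unilateral part, whose curvature at `∅` is the least one
that occurs. If all these least curvatures of voter `i` were positive, a multiple of the
dictatorship of `i` could be split off; hence for a `0`-randomly dictatorial scheme the unilateral
part of each voter satisfies `W {x, y} = W {x} + W {y}` for some `x ≠ y`.

Let `G V` be the probability of `V` when all voters rank `V` on top. Switching the voters one at a
time shows that `G` has the curvature of the sum of the unilateral parts plus a nonnegative one
that does not depend on `U`. The functional `pairSurplus` depends on the curvature only and is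
nonnegative on each summand, for the last one because `m ≥ 3`. Therefore the numbers
`G {x, y} - G {x}`, which are the probabilities of `y` when everybody ranks `x` first and `y`
second, average to at least `1 / m`.
-/

section SetFunctions

variable {α : Type*} [DecidableEq α] {W A B : Finset α → ℝ} {S T U V : Finset α} {x y z : α}

/-- The negated second difference of a set function at `U` in the directions `x` and `y`: how much
the marginal value of `x` drops when `y` is added to `U`. It is linear in the set function. -/
def curv (U : Finset α) (x y : α) : (Finset α → ℝ) →ₗ[ℝ] ℝ :=
  .proj (insert x U) + .proj (insert y U) - .proj U - .proj (insert x (insert y U))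

lemma curv_apply (U : Finset α) (x y : α) (W : Finset α → ℝ) :
    curv U x y W = W (insert x U) + W (insert y U) - W U - W (insert x (insert y U)) := rfl

lemma curv_comm (U : Finset α) (x y : α) : curv U x y = curv U y x := by
  ext W
  rw [curv_apply, curv_apply, insert_comm]
  ring

lemma curv_empty_apply (hW : W ∅ = 0) (x y : α) :
    curv ∅ x y W = W {x} + W {y} - W {x, y} := by
  simp [curv_apply, hW]

lemma curv_eq_sub_of_eq_sum {p q : α → ℝ} (hxy : x ≠ y) (hx : x ∉ U)
    (hU : W U = ∑ a ∈ U, p a) (hxU : W (insert x U) = ∑ a ∈ insert x U, p a)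
    (hyU : W (insert y U) = ∑ a ∈ insert y U, q a)
    (hxyU : W (insert x (insert y U)) = ∑ a ∈ insert x (insert y U), q a) :
    curv U x y W = p x - q x := by
  have hx' : x ∉ insert y U := by simp [hx, hxy]
  rw [curv_apply, hU, hxU, hyU, hxyU, sum_insert hx, sum_insert hx']
  ring

/-- Submodularity of a set function, in its local form (diminishing marginal values when one
element is added). -/
def Submodular (W : Finset α → ℝ) : Prop :=
  ∀ ⦃U x y⦄, x ≠ y → x ∉ U → y ∉ U → 0 ≤ curv U x y W

namespace Submodular

lemma marginal_anti (hW : Submodular W) (hST : S ⊆ T) (hy : y ∉ T) :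
    W (insert y T) - W T ≤ W (insert y S) - W S := by
  obtain ⟨V, rfl⟩ : ∃ V, S ∪ V = T := ⟨T, union_eq_right.2 hST⟩
  clear hST
  induction V using Finset.induction_on with
  | empty => simp
  | insert a V _ ih =>
    rw [union_insert] at hy ⊢
    obtain ⟨hya, hyV⟩ : y ≠ a ∧ y ∉ S ∪ V := by simpa only [mem_insert, not_or] using hy
    by_cases ha : a ∈ S ∪ V
    · simpa only [insert_eq_of_mem ha] using ih hyV
    · have hcurv := hW hya hyV ha
      rw [curv_apply] at hcurv
      linarith [ih hyV]

lemma sub_le_sum_marginal (hW : Submodular W) (hST : S ⊆ T) (hTV : Disjoint T V) :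
    W (T ∪ V) - W T ≤ ∑ a ∈ V, (W (insert a S) - W S) := by
  induction V using Finset.induction_on with
  | empty => simp
  | insert a V ha ih =>
    rw [disjoint_insert_right] at hTV
    rw [sum_insert ha, union_insert]
    have hmarginal := hW.marginal_anti (hST.trans subset_union_left)
      (show a ∉ T ∪ V by simp [hTV.1, ha])
    linarith [ih hTV.2]

end Submodular

lemma eq_sum_singleton_of_curv_eq_zero (h0 : W ∅ = 0)
    (hW : ∀ U x y, x ≠ y → x ∉ U → y ∉ U → curv U x y W = 0) (V : Finset α) :
    W V = ∑ a ∈ V, W {a} := by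
  have hsub : Submodular W := fun U x y hxy hx hy => (hW U x y hxy hx hy).ge
  have hsuper : Submodular (-W) := fun U x y hxy hx hy => by
    rw [map_neg, hW U x y hxy hx hy, neg_zero]
  have hle := hsub.sub_le_sum_marginal (empty_subset ∅) (disjoint_empty_left V)
  have hge := hsuper.sub_le_sum_marginal (empty_subset ∅) (disjoint_empty_left V)
  simp only [empty_union, insert_empty_eq, Pi.neg_apply, h0, neg_zero, sub_zero,
    sum_neg_distrib] at hle hge
  linarith

/-- The set function whose curvature in the directions `x` and `y` is constantly `D x y`
(for symmetric `D`). -/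
def quadSetFun (D : α → α → ℝ) (V : Finset α) : ℝ :=
  -(∑ a ∈ V, ∑ b ∈ V, D a b) / 2

lemma curv_quadSetFun {D : α → α → ℝ} (hD : ∀ a b, D a b = D b a)
    (hxy : x ≠ y) (hx : x ∉ U) (hy : y ∉ U) : curv U x y (quadSetFun D) = D x y := by
  have hx' : x ∉ insert y U := by simp [hx, hxy]
  simp only [curv_apply, quadSetFun, sum_insert hx, sum_insert hy, sum_insert hx',
    sum_add_distrib, hD y x]
  ring

variable [Fintype α]

/-- The functional `∑ a, ∑ b, (W {a, b} - W {a}) - (|α| - 1) * W univ`. The terms with `a = b`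
vanish, so it is nonnegative precisely when the second-step marginals `W {a, b} - W {a}`, `a ≠ b`,
average to at least `W univ / |α|`. -/
def pairSurplus : (Finset α → ℝ) →ₗ[ℝ] ℝ :=
  ∑ a : α, ∑ b : α, (.proj {a, b} - .proj {a}) - ((Fintype.card α : ℝ) - 1) • .proj univ

lemma pairSurplus_apply (W : Finset α → ℝ) :
    pairSurplus W =
      ∑ a, ∑ b, (W {a, b} - W {a}) - ((Fintype.card α : ℝ) - 1) * W univ := by
  simp [pairSurplus]

lemma pairSurplus_eq_zero_of_eq_sum (hW : ∀ V, W V = ∑ a ∈ V, W {a}) : pairSurplus W = 0 := by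
  have hpair (a b : α) : W {a, b} - W {a} = W {b} - if a = b then W {b} else 0 := by
    split_ifs with hab
    · simp [hab]
    · rw [hW {a, b}, sum_pair hab]
      ring
  simp only [pairSurplus_apply, hpair, hW univ, sum_sub_distrib, sum_ite_eq, mem_univ, if_true,
    sum_const, card_univ, nsmul_eq_mul]
  ring

lemma pairSurplus_congr (hA : A ∅ = 0) (hB : B ∅ = 0)
    (h : ∀ U x y, x ≠ y → x ∉ U → y ∉ U → curv U x y A = curv U x y B) :
    pairSurplus A = pairSurplus B := by
  rw [← sub_eq_zero, ← map_sub]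
  refine pairSurplus_eq_zero_of_eq_sum (eq_sum_singleton_of_curv_eq_zero (by simp [hA, hB]) ?_)
  intro U x y hxy hx hy
  rw [map_sub, h U x y hxy hx hy, sub_self]

lemma pairSurplus_quadSetFun {D : α → α → ℝ} (hD : ∀ a b, D a b = D b a) :
    pairSurplus (quadSetFun D) =
      ((Fintype.card α : ℝ) - 3) / 2 * ∑ a, (∑ b, D a b - D a a) := by
  have hpair (a b : α) : quadSetFun D {a, b} - quadSetFun D {a} =
      (if a = b then 3 / 2 * D a b else 0) - D a b - D b b / 2 := by
    split_ifs with hab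
    · subst hab
      simp only [pair_eq_singleton, sub_self]
      ring
    · simp only [quadSetFun, sum_pair hab, sum_singleton, hD b a]
      ring
  have huniv : quadSetFun D univ = -(∑ a, ∑ b, D a b) / 2 := rfl
  simp only [pairSurplus_apply, hpair, huniv, sum_sub_distrib, sum_ite_eq, mem_univ, if_true,
    sum_const, card_univ, nsmul_eq_mul, ← mul_sum, ← sum_div]
  ring

lemma pairSurplus_quadSetFun_nonneg (hcard : 3 ≤ Fintype.card α) {D : α → α → ℝ}
    (hD : ∀ a b, D a b = D b a) (hpos : ∀ a b, a ≠ b → 0 ≤ D a b) :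
    0 ≤ pairSurplus (quadSetFun D) := by
  have hcard' : (3 : ℝ) ≤ Fintype.card α := by exact_mod_cast hcard
  rw [pairSurplus_quadSetFun hD]
  refine mul_nonneg (by linarith) (sum_nonneg fun a _ => ?_)
  rw [← sum_erase_eq_sub (mem_univ a)]
  exact sum_nonneg fun b hb => hpos a b (ne_of_mem_erase hb).symm

lemma Submodular.univ_sub_le_sum_marginal (hW : Submodular W) (hST : S ⊆ T) :
    W univ - W T ≤ ∑ a ∈ Tᶜ, (W (insert a S) - W S) := by
  simpa only [union_compl] using hW.sub_le_sum_marginal hST disjoint_compl_right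

lemma Submodular.univ_add_le_sum_pair_marginal (hW : Submodular W) (hxy : x ≠ y) (hzx : z ≠ x)
    (hzy : z ≠ y) :
    W univ + (W {x, y, z} - W {x, y}) ≤
      (W {x, z} - W {x}) + (W {y, z} - W {y}) + (W {x} + W {y} - W {x, y}) +
        ∑ b, (W {z, b} - W {z}) := by
  have hcurv : W {x, y, z} ≤ W {x, z} + W {y, z} - W {z} := by
    have h := hW (U := {z}) hxy (by simpa using hzx.symm) (by simpa using hzy.symm)
    rw [curv_apply] at h
    linarith
  have hrest : W univ - W {x, y, z} ≤ ∑ b ∈ {x, y, z}ᶜ, (W {z, b} - W {z}) := by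
    simpa only [pair_comm z] using
      hW.univ_sub_le_sum_marginal (S := {z}) (T := {x, y, z}) (by simp)
  have hrow : ∑ b, (W {z, b} - W {z}) = (W {x, z} - W {z}) + (W {y, z} - W {z}) +
      ∑ b ∈ {x, y, z}ᶜ, (W {z, b} - W {z}) := by
    rw [← sum_add_sum_compl {x, y, z}, sum_insert (by simp [hxy, hzx.symm]),
      sum_pair hzy.symm, pair_comm z x, pair_comm z y]
    simp
  linarith

lemma Submodular.pairSurplus_nonneg_of_eq_add (hW : Submodular W) (hxy : x ≠ y)
    (htight : W {x, y} = W {x} + W {y}) : 0 ≤ pairSurplus W := by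
  set P : Finset α := {x, y} with hP
  have hthird : W univ - W P ≤ ∑ z ∈ Pᶜ, (W {x, y, z} - W P) := by
    refine (hW.univ_sub_le_sum_marginal subset_rfl).trans_eq (sum_congr rfl fun z _ => ?_)
    rw [hP, insert_comm z, pair_comm z]
  have hrows := sum_le_sum fun z (hz : z ∈ Pᶜ) => by
    obtain ⟨hzx, hzy⟩ : z ≠ x ∧ z ≠ y := by simpa [hP] using hz
    exact hW.univ_add_le_sum_pair_marginal hxy hzx hzy
  have hcard : ((Pᶜ).card : ℝ) = Fintype.card α - 2 := by
    rw [card_compl, Nat.cast_sub (card_le_univ P), hP, card_pair hxy]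
    norm_num
  have htotal : ∑ a, ∑ b, (W {a, b} - W {a}) =
      W P + ∑ z ∈ Pᶜ, (W {x, z} - W {x}) + ∑ z ∈ Pᶜ, (W {y, z} - W {y}) +
        ∑ z ∈ Pᶜ, ∑ b, (W {z, b} - W {z}) := by
    rw [← sum_add_sum_compl P, sum_pair hxy, ← sum_add_sum_compl P (fun b => W {x, b} - W {x}),
      ← sum_add_sum_compl P (fun b => W {y, b} - W {y}), sum_pair hxy, sum_pair hxy]
    simp only [pair_comm y x, pair_eq_singleton, ← hP]
    linarith
  simp only [← hP, htight, sub_self, add_zero, sum_add_distrib, sum_const, nsmul_eq_mul,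
    hcard] at hrows hthird htotal
  rw [pairSurplus_apply, htotal]
  linarith

lemma exists_div_card_le_of_pairSurplus_nonneg [Nontrivial α] (hW : 0 ≤ pairSurplus W) :
    ∃ x y, x ≠ y ∧ W univ / Fintype.card α ≤ W {x, y} - W {x} := by
  have hcard : (Fintype.card α : ℝ) ≠ 0 := by simp
  obtain ⟨⟨x, y⟩, hp, hle⟩ : ∃ p ∈ (univ : Finset α).offDiag,
      W univ / Fintype.card α ≤ W {p.1, p.2} - W {p.1} := by
    obtain ⟨a, b, hab⟩ := exists_pair_ne α
    refine exists_le_of_sum_le ⟨(a, b), by simpa using hab⟩ ?_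
    have hsum : ∑ p ∈ univ.offDiag, (W {p.1, p.2} - W {p.1}) = ∑ a, ∑ b, (W {a, b} - W {a}) := by
      rw [← sum_product', ← diag_union_offDiag, sum_union (disjoint_diag_offDiag _)]
      simp
    rw [hsum, sum_const, offDiag_card, nsmul_eq_mul, Nat.cast_sub (Nat.le_mul_self _), card_univ]
    rw [pairSurplus_apply] at hW
    push_cast
    field_simp
    linarith
  exact ⟨x, y, by simpa using hp, hle⟩

end SetFunctions

section Rankings

variable {m : ℕ} {σ : Equiv.Perm (Fin m)} {U V : Finset (Fin m)} {x y : Fin m}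

/-- The alternatives in `V` are ranked above all others by `σ`. -/
def IsTopSet (σ : Equiv.Perm (Fin m)) (V : Finset (Fin m)) : Prop :=
  ∀ a ∈ V, ∀ b ∉ V, σ a < σ b

lemma isTopSet_filter_lt (σ : Equiv.Perm (Fin m)) (x : Fin m) :
    IsTopSet σ (univ.filter fun a => σ a < σ x) := by
  intro a ha b hb
  simp only [mem_filter, mem_univ, true_and, not_lt] at ha hb
  exact ha.trans_le hb

lemma isTopSet_insert_filter_lt (σ : Equiv.Perm (Fin m)) (x : Fin m) :
    IsTopSet σ (insert x (univ.filter fun a => σ a < σ x)) := by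
  intro a ha b hb
  simp only [mem_insert, mem_filter, mem_univ, true_and, not_or, not_lt] at ha hb
  have hxb : σ x < σ b := hb.2.lt_of_ne' (σ.injective.ne hb.1)
  rcases ha with rfl | ha
  exacts [hxb, ha.trans hxb]

lemma isTopSet_singleton_iff : IsTopSet σ {x} ↔ ∀ a, σ x ≤ σ a := by
  simp only [IsTopSet, mem_singleton, forall_eq]
  refine ⟨fun h a => ?_, fun h a ha => (h a).lt_of_ne' (σ.injective.ne ha)⟩
  rcases eq_or_ne a x with rfl | ha
  exacts [le_rfl, (h a ha).le]

lemma exists_isTopSet_singleton [Nonempty (Fin m)] (σ : Equiv.Perm (Fin m)) :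
    ∃ t, IsTopSet σ {t} :=
  (Finite.exists_min σ).imp fun _ => isTopSet_singleton_iff.2

lemma IsTopSet.exists_eq_filter_lt (hV : IsTopSet σ V) (hne : V ≠ univ) :
    ∃ b, V = univ.filter fun a => σ a < σ b := by
  obtain ⟨b, hb, hmin⟩ := exists_min_image Vᶜ σ (by simpa [nonempty_iff_ne_empty] using hne)
  simp only [mem_compl] at hb hmin
  refine ⟨b, ext fun a => ?_⟩
  simp only [mem_filter, mem_univ, true_and]
  exact ⟨fun ha => hV a ha b hb, fun ha => by_contra fun haV => (hmin a haV).not_gt ha⟩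

/-- A ranking that orders the alternatives by increasing `key`, with arbitrary tie-breaking. -/
def rankBy (key : Fin m → ℕ) : Equiv.Perm (Fin m) :=
  (Tuple.sort key).symm

lemma rankBy_lt_rankBy {key : Fin m → ℕ} {a b : Fin m} (h : key a < key b) :
    rankBy key a < rankBy key b := by
  by_contra hba
  have hkey := Tuple.monotone_sort key (not_lt.1 hba)
  simp only [rankBy, Function.comp_apply, Equiv.apply_symm_apply] at hkey
  omega

lemma rankBy_lt_rankBy_iff {key : Fin m → ℕ} (hkey : key.Injective) {a b : Fin m} :
    rankBy key a < rankBy key b ↔ key a < key b := by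
  refine ⟨fun h => ?_, rankBy_lt_rankBy⟩
  by_contra hba
  rcases (not_lt.1 hba).eq_or_lt with hab | hba
  · exact h.ne (congrArg _ (hkey hab).symm)
  · exact h.not_gt (rankBy_lt_rankBy hba)

/-- A ranking with the alternatives in `V` on top. -/
def topRank (V : Finset (Fin m)) : Equiv.Perm (Fin m) :=
  rankBy fun a => if a ∈ V then 0 else 1

lemma isTopSet_topRank (V : Finset (Fin m)) : IsTopSet (topRank V) V :=
  fun a ha b hb => rankBy_lt_rankBy (by simp [ha, hb])

/-- A ranking with the alternatives in `U` on top, followed by `x` and then by `y`. -/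
def stackRank (U : Finset (Fin m)) (x y : Fin m) : Equiv.Perm (Fin m) :=
  rankBy fun a => if a ∈ U then 0 else if a = x then 1 else if a = y then 2 else 3

lemma isTopSet_stackRank (U : Finset (Fin m)) (x y : Fin m) : IsTopSet (stackRank U x y) U :=
  fun a ha b hb => rankBy_lt_rankBy (by grind)

lemma isTopSet_stackRank_insert (U : Finset (Fin m)) (x y : Fin m) :
    IsTopSet (stackRank U x y) (insert x U) :=
  fun a ha b hb => rankBy_lt_rankBy (by grind)

lemma isTopSet_stackRank_insert_insert (U : Finset (Fin m)) (x y : Fin m) :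
    IsTopSet (stackRank U x y) (insert y (insert x U)) :=
  fun a ha b hb => rankBy_lt_rankBy (by grind)

lemma stackRank_lt (hxy : x ≠ y) (hx : x ∉ U) (hy : y ∉ U) :
    stackRank U x y x < stackRank U x y y :=
  rankBy_lt_rankBy (by simp [hx, hy, hxy.symm])

/-- The ranking obtained from `σ` by moving `x` to the top. -/
def moveToTop (σ : Equiv.Perm (Fin m)) (x : Fin m) : Equiv.Perm (Fin m) :=
  rankBy fun a => if a = x then 0 else (σ a : ℕ) + 1

lemma moveToTop_lt_iff {a b : Fin m} : moveToTop σ x a < moveToTop σ x b ↔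
    (if a = x then 0 else (σ a : ℕ) + 1) < if b = x then 0 else (σ b : ℕ) + 1 := by
  refine rankBy_lt_rankBy_iff fun a b hab => σ.injective (Fin.ext ?_)
  grind

lemma not_moveToTop_lt_self (a : Fin m) : ¬ moveToTop σ x a < moveToTop σ x x := by
  simp [moveToTop_lt_iff]

lemma moveToTop_lt_iff_lt_of_lt (hxy : σ x < σ y) (a : Fin m) :
    moveToTop σ x a < moveToTop σ x y ↔ σ a < σ y := by
  rw [moveToTop_lt_iff]
  grind

end Rankings

lemma eq_of_update_invariant {ι β : Type*} {α : ι → Type*} [Finite ι] [DecidableEq ι]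
    {P : ∀ i, α i → Prop} {Φ : (∀ i, α i) → β}
    (h : ∀ f i a, (∀ j, P j (f j)) → P i a → Φ (Function.update f i a) = Φ f)
    {f g : ∀ i, α i} (hf : ∀ i, P i (f i)) (hg : ∀ i, P i (g i)) : Φ f = Φ g := by
  cases nonempty_fintype ι
  have hpiecewise (s : Finset ι) : Φ (s.piecewise g f) = Φ f := by
    induction s using Finset.induction_on with
    | empty => rw [piecewise_empty]
    | insert i s _ ih =>
      rw [piecewise_insert, h _ _ _ (fun j => ?_) (hg i), ih]
      exact piecewise_cases s g f (P j) (hg j) (hf j)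
  rw [← hpiecewise univ, piecewise_univ]

section StrategyproofSchemes

open Function

variable {n m : ℕ} {F : Profile n m → Fin m → ℝ} {R R' : Profile n m} {i j : Fin n}
  {σ τ : Equiv.Perm (Fin m)} {U V : Finset (Fin m)} {x y : Fin m}

namespace Strategyproof

lemma sum_update_le_sum_update (hsp : Strategyproof F) (hF : IsSDS F) (hσ : IsTopSet σ V)
    (R : Profile n m) (i : Fin n) (τ : Equiv.Perm (Fin m)) :
    ∑ a ∈ V, F (update R i τ) a ≤ ∑ a ∈ V, F (update R i σ) a := by
  rcases eq_or_ne V univ with rfl | hne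
  · rw [hF.2, hF.2]
  · obtain ⟨b, rfl⟩ := hσ.exists_eq_filter_lt hne
    simpa using hsp (update R i σ) (update R i τ) i (fun j hj => by simp [hj]) b

lemma sum_update_eq_sum_update (hsp : Strategyproof F) (hF : IsSDS F) (hσ : IsTopSet σ V)
    (hτ : IsTopSet τ V) (R : Profile n m) (i : Fin n) :
    ∑ a ∈ V, F (update R i σ) a = ∑ a ∈ V, F (update R i τ) a :=
  le_antisymm (hsp.sum_update_le_sum_update hF hτ R i σ)
    (hsp.sum_update_le_sum_update hF hσ R i τ)

lemma apply_update_eq_of_forall_lt_iff (hsp : Strategyproof F) (hF : IsSDS F)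
    (h : ∀ a, σ a < σ x ↔ τ a < τ x) (R : Profile n m) (i : Fin n) :
    F (update R i σ) x = F (update R i τ) x := by
  have hfilter : (univ.filter fun a => σ a < σ x) = univ.filter fun a => τ a < τ x := by
    simp only [h]
  have hupper := hsp.sum_update_eq_sum_update hF (isTopSet_filter_lt σ x)
    (hfilter ▸ isTopSet_filter_lt τ x) R i
  have hupper_insert := hsp.sum_update_eq_sum_update hF (isTopSet_insert_filter_lt σ x)
    (hfilter ▸ isTopSet_insert_filter_lt τ x) R i
  rw [sum_insert (by simp), sum_insert (by simp)] at hupper_insert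
  linarith

end Strategyproof

/-- The largest probability of ending up in `V` that voter `i` can secure against the fixed
preferences of the other voters in `R`. For a strategyproof `F` it is attained by any report with
`V` on top, and the definition uses one such report in place of `R i`. -/
def maxProb (F : Profile n m → Fin m → ℝ) (i : Fin n) (R : Profile n m) (V : Finset (Fin m)) : ℝ :=
  ∑ a ∈ V, F (update R i (topRank V)) a

lemma maxProb_empty (F : Profile n m → Fin m → ℝ) (i : Fin n) (R : Profile n m) :
    maxProb F i R ∅ = 0 :=
  sum_empty

lemma maxProb_update_self (F : Profile n m → Fin m → ℝ) (i : Fin n) (R : Profile n m)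
    (σ : Equiv.Perm (Fin m)) : maxProb F i (update R i σ) = maxProb F i R := by
  funext V
  simp only [maxProb, update_idem]

namespace Strategyproof

lemma sum_update_le_maxProb (hsp : Strategyproof F) (hF : IsSDS F) (i : Fin n) (R : Profile n m)
    (σ : Equiv.Perm (Fin m)) (V : Finset (Fin m)) :
    ∑ a ∈ V, F (update R i σ) a ≤ maxProb F i R V :=
  hsp.sum_update_le_sum_update hF (isTopSet_topRank V) R i σ

lemma maxProb_eq_sum_update (hsp : Strategyproof F) (hF : IsSDS F) (i : Fin n) (R : Profile n m)
    (hσ : IsTopSet σ V) : maxProb F i R V = ∑ a ∈ V, F (update R i σ) a :=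
  hsp.sum_update_eq_sum_update hF (isTopSet_topRank V) hσ R i

lemma curv_maxProb (hsp : Strategyproof F) (hF : IsSDS F) (i : Fin n) (R : Profile n m)
    (hxy : x ≠ y) (hx : x ∉ U) :
    curv U x y (maxProb F i R) =
      F (update R i (stackRank U x y)) x - F (update R i (stackRank U y x)) x :=
  curv_eq_sub_of_eq_sum hxy hx
    (hsp.maxProb_eq_sum_update hF i R (isTopSet_stackRank U x y))
    (hsp.maxProb_eq_sum_update hF i R (isTopSet_stackRank_insert U x y))
    (hsp.maxProb_eq_sum_update hF i R (isTopSet_stackRank_insert U y x))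
    (hsp.maxProb_eq_sum_update hF i R (isTopSet_stackRank_insert_insert U y x))

lemma submodular_maxProb (hsp : Strategyproof F) (hF : IsSDS F) (i : Fin n) (R : Profile n m) :
    Submodular (maxProb F i R) := by
  intro U x y hxy hx _
  have hU := hsp.sum_update_eq_sum_update hF (isTopSet_stackRank U x y)
    (isTopSet_stackRank U y x) R i
  have hxU := hsp.sum_update_le_sum_update hF (isTopSet_stackRank_insert U x y) R i
    (stackRank U y x)
  rw [sum_insert hx, sum_insert hx] at hxU
  rw [hsp.curv_maxProb hF i R hxy hx]
  linarith

lemma curv_maxProb_update_eq_of_forall_lt_iff (hsp : Strategyproof F) (hF : IsSDS F)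
    (i j : Fin n) (R : Profile n m) (hxy : x ≠ y) (hx : x ∉ U)
    (h : ∀ a, σ a < σ x ↔ τ a < τ x) :
    curv U x y (maxProb F i (update R j σ)) = curv U x y (maxProb F i (update R j τ)) := by
  rcases eq_or_ne j i with rfl | hji
  · rw [maxProb_update_self, maxProb_update_self]
  · simp only [hsp.curv_maxProb hF i _ hxy hx, update_comm hji,
      hsp.apply_update_eq_of_forall_lt_iff hF h]

lemma curv_maxProb_update_eq_of_lt (hsp : Strategyproof F) (hF : IsSDS F) (i j : Fin n)
    (R : Profile n m) (hx : x ∉ U) (hy : y ∉ U) (hσ : σ x < σ y) (hτ : τ x < τ y) :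
    curv U x y (maxProb F i (update R j σ)) = curv U x y (maxProb F i (update R j τ)) := by
  have hxy : x ≠ y := by
    rintro rfl
    exact hσ.false
  have hmove {ρ : Equiv.Perm (Fin m)} (hρ : ρ x < ρ y) :
      curv U x y (maxProb F i (update R j (moveToTop ρ x))) =
        curv U x y (maxProb F i (update R j ρ)) := by
    simpa only [curv_comm U y x] using hsp.curv_maxProb_update_eq_of_forall_lt_iff hF i j R
      hxy.symm hy (moveToTop_lt_iff_lt_of_lt hρ)
  rw [← hmove hσ, ← hmove hτ]
  refine hsp.curv_maxProb_update_eq_of_forall_lt_iff hF i j R hxy hx fun a => ?_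
  simp only [not_moveToTop_lt_self]

lemma curv_maxProb_update_eq (hsp : Strategyproof F) (hF : IsSDS F) (i j : Fin n)
    (R : Profile n m) (hxy : x ≠ y) (hx : x ∉ U) (hy : y ∉ U) (h : σ x < σ y ↔ τ x < τ y) :
    curv U x y (maxProb F i (update R j σ)) = curv U x y (maxProb F i (update R j τ)) := by
  by_cases hσ : σ x < σ y
  · exact hsp.curv_maxProb_update_eq_of_lt hF i j R hx hy hσ (h.1 hσ)
  · have hτ : ¬ τ x < τ y := fun hτ => hσ (h.2 hτ)
    rw [curv_comm]
    exact hsp.curv_maxProb_update_eq_of_lt hF i j R hy hx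
      ((not_lt.1 hσ).lt_of_ne' (σ.injective.ne hxy))
      ((not_lt.1 hτ).lt_of_ne' (τ.injective.ne hxy))

lemma curv_maxProb_congr (hsp : Strategyproof F) (hF : IsSDS F)
    (hxy : x ≠ y) (hx : x ∉ U) (hy : y ∉ U)
    (h : ∀ j ≠ i, (R j x < R j y ↔ R' j x < R' j y)) :
    curv U x y (maxProb F i R) = curv U x y (maxProb F i R') := by
  refine eq_of_update_invariant
    (P := fun j (ρ : Equiv.Perm (Fin m)) => j ≠ i → (ρ x < ρ y ↔ R' j x < R' j y))
    (Φ := fun S => curv U x y (maxProb F i S))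
    (fun S j ρ hS hρ => ?_) h fun _ _ => Iff.rfl
  rcases eq_or_ne j i with rfl | hji
  · rw [maxProb_update_self]
  · simpa using hsp.curv_maxProb_update_eq hF i j S hxy hx hy ((hρ hji).trans (hS j hji).symm)

/-- Both sides are the mixed second difference of `F · x` in the reports of `i` and `j`; the
ranking of `i` on the left has `U` on top, but on the right only its order of `x` and `y`
matters. -/
lemma curv_maxProb_update_sub (hsp : Strategyproof F) (hF : IsSDS F) (hij : i ≠ j)
    (R : Profile n m) (hxy : x ≠ y) (hx : x ∉ U) (hy : y ∉ U) :
    curv U x y (maxProb F i (update R j (stackRank ∅ x y))) -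
        curv U x y (maxProb F i (update R j (stackRank ∅ y x))) =
      curv ∅ x y (maxProb F j (update R i (stackRank ∅ x y))) -
        curv ∅ x y (maxProb F j (update R i (stackRank ∅ y x))) := by
  have hx₀ : x ∉ (∅ : Finset (Fin m)) := notMem_empty x
  have hy₀ : y ∉ (∅ : Finset (Fin m)) := notMem_empty y
  have habove : stackRank ∅ x y x < stackRank ∅ x y y ↔ stackRank U x y x < stackRank U x y y := by
    simp only [stackRank_lt hxy, hx₀, hy₀, hx, hy, not_false_eq_true]
  have hbelow : stackRank ∅ y x x < stackRank ∅ y x y ↔ stackRank U y x x < stackRank U y x y := by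
    simp only [(stackRank_lt hxy.symm hy₀ hx₀).not_gt, (stackRank_lt hxy.symm hy hx).not_gt]
  rw [hsp.curv_maxProb_update_eq hF j i R hxy hx₀ hy₀ habove,
    hsp.curv_maxProb_update_eq hF j i R hxy hx₀ hy₀ hbelow]
  simp only [hsp.curv_maxProb hF _ _ hxy hx, hsp.curv_maxProb hF _ _ hxy hx₀, update_comm hij]
  ring

lemma curv_maxProb_sub_curv_empty_update (hsp : Strategyproof F) (hF : IsSDS F) (i j : Fin n)
    (R : Profile n m) (σ : Equiv.Perm (Fin m)) (hxy : x ≠ y) (hx : x ∉ U) (hy : y ∉ U) :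
    curv U x y (maxProb F i (update R j σ)) - curv ∅ x y (maxProb F i (update R j σ)) =
      curv U x y (maxProb F i (update R j (stackRank ∅ x y))) -
        curv ∅ x y (maxProb F i (update R j (stackRank ∅ x y))) := by
  rcases eq_or_ne i j with rfl | hij
  · simp only [maxProb_update_self]
  have hx₀ : x ∉ (∅ : Finset (Fin m)) := notMem_empty x
  have hy₀ : y ∉ (∅ : Finset (Fin m)) := notMem_empty y
  by_cases hσ : σ x < σ y
  · have hrank := stackRank_lt hxy hx₀ hy₀
    rw [hsp.curv_maxProb_update_eq_of_lt hF i j R hx hy hσ hrank,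
      hsp.curv_maxProb_update_eq_of_lt hF i j R hx₀ hy₀ hσ hrank]
  · have horder : σ x < σ y ↔ stackRank ∅ y x x < stackRank ∅ y x y := by
      simp only [hσ, (stackRank_lt hxy.symm hy₀ hx₀).not_gt]
    rw [hsp.curv_maxProb_update_eq hF i j R hxy hx hy horder,
      hsp.curv_maxProb_update_eq hF i j R hxy hx₀ hy₀ horder]
    linarith [hsp.curv_maxProb_update_sub hF hij R hxy hx hy,
      hsp.curv_maxProb_update_sub hF hij R hxy hx₀ hy₀]

lemma curv_maxProb_sub_curv_empty_eq (hsp : Strategyproof F) (hF : IsSDS F) (i : Fin n)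
    (R R' : Profile n m) (hxy : x ≠ y) (hx : x ∉ U) (hy : y ∉ U) :
    curv U x y (maxProb F i R) - curv ∅ x y (maxProb F i R) =
      curv U x y (maxProb F i R') - curv ∅ x y (maxProb F i R') := by
  refine eq_of_update_invariant (P := fun _ _ => True)
    (Φ := fun S => curv U x y (maxProb F i S) - curv ∅ x y (maxProb F i S))
    (fun S j σ _ _ => ?_) (fun _ => trivial) fun _ => trivial
  have h := hsp.curv_maxProb_sub_curv_empty_update hF i j S (S j) hxy hx hy
  rw [update_eq_self] at h
  exact (hsp.curv_maxProb_sub_curv_empty_update hF i j S σ hxy hx hy).trans h.symm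

end Strategyproof

/-- The probability of `V` when every voter ranks the alternatives in `V` on top. -/
def unanimousProb (F : Profile n m → Fin m → ℝ) (V : Finset (Fin m)) : ℝ :=
  ∑ a ∈ V, F (fun _ => topRank V) a

lemma unanimousProb_empty (F : Profile n m → Fin m → ℝ) : unanimousProb F ∅ = 0 :=
  sum_empty

lemma unanimousProb_univ (hF : IsSDS F) : unanimousProb F univ = 1 :=
  hF.2 _

/-- The profile in which the first `k` voters report `σ` and the others report `τ`. -/
def thresholdProfile (σ τ : Equiv.Perm (Fin m)) (k : ℕ) : Profile n m :=
  fun j => if (j : ℕ) < k then σ else τ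

lemma update_thresholdProfile_left (σ τ : Equiv.Perm (Fin m)) (i : Fin n) :
    update (thresholdProfile σ τ i) i σ = thresholdProfile σ τ (i + 1) := by
  funext j
  rcases eq_or_ne j i with rfl | hji
  · simp [thresholdProfile]
  · simp [thresholdProfile, hji, Order.lt_add_one_iff, Fin.val_fin_le, hji.le_iff_lt]

lemma update_thresholdProfile_right (σ τ : Equiv.Perm (Fin m)) (i : Fin n) :
    update (thresholdProfile σ τ i) i τ = thresholdProfile σ τ i := by
  simp [thresholdProfile]

lemma sum_update_thresholdProfile_sub (Φ : Profile n m → ℝ) (σ τ : Equiv.Perm (Fin m)) :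
    ∑ i : Fin n,
        (Φ (update (thresholdProfile σ τ i) i σ) - Φ (update (thresholdProfile σ τ i) i τ)) =
      Φ (fun _ => σ) - Φ (fun _ => τ) := by
  have hlast : thresholdProfile σ τ n = fun _ : Fin n => σ := by
    funext j
    exact if_pos j.isLt
  have hfirst : thresholdProfile σ τ 0 = fun _ : Fin n => τ := by
    funext j
    exact if_neg (Nat.not_lt_zero _)
  simp only [update_thresholdProfile_left, update_thresholdProfile_right]
  rw [Fin.sum_univ_eq_sum_range
      (fun k => Φ (thresholdProfile σ τ (k + 1)) - Φ (thresholdProfile σ τ k)),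
    sum_range_sub (fun k => Φ (thresholdProfile σ τ k)), hlast, hfirst]

namespace Strategyproof

lemma unanimousProb_eq_sum (hsp : Strategyproof F) (hF : IsSDS F) (hσ : IsTopSet σ V) :
    unanimousProb F V = ∑ a ∈ V, F (fun _ => σ) a := by
  refine eq_of_update_invariant (P := fun _ (ρ : Equiv.Perm (Fin m)) => IsTopSet ρ V)
    (Φ := fun S : Profile n m => ∑ a ∈ V, F S a)
    (fun S j ρ hS hρ => ?_) (fun _ => isTopSet_topRank V) fun _ => hσ
  simpa only [update_eq_self] using hsp.sum_update_eq_sum_update hF hρ (hS j) S j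

lemma unanimousProb_pair_sub (hsp : Strategyproof F) (hF : IsSDS F) (hxy : x ≠ y) :
    unanimousProb F {x, y} - unanimousProb F {x} = F (fun _ => stackRank ∅ x y) y := by
  have hsingle := hsp.unanimousProb_eq_sum hF (isTopSet_stackRank_insert ∅ x y)
  have hpair := hsp.unanimousProb_eq_sum hF (isTopSet_stackRank_insert_insert ∅ x y)
  rw [insert_empty_eq, sum_singleton] at hsingle
  rw [insert_empty_eq, pair_comm, sum_pair hxy] at hpair
  rw [hsingle, hpair, add_sub_cancel_left]

lemma curv_unanimousProb (hsp : Strategyproof F) (hF : IsSDS F)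
    (hxy : x ≠ y) (hx : x ∉ U) (hy : y ∉ U) :
    curv U x y (unanimousProb F) =
      ∑ i, curv U x y
        (maxProb F i (thresholdProfile (stackRank ∅ x y) (stackRank ∅ y x) i)) := by
  have hx₀ : x ∉ (∅ : Finset (Fin m)) := notMem_empty x
  have hy₀ : y ∉ (∅ : Finset (Fin m)) := notMem_empty y
  have hdiff : curv U x y (unanimousProb F) =
      F (fun _ => stackRank U x y) x - F (fun _ => stackRank U y x) x :=
    curv_eq_sub_of_eq_sum hxy hx
      (hsp.unanimousProb_eq_sum hF (isTopSet_stackRank U x y))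
      (hsp.unanimousProb_eq_sum hF (isTopSet_stackRank_insert U x y))
      (hsp.unanimousProb_eq_sum hF (isTopSet_stackRank_insert U y x))
      (hsp.unanimousProb_eq_sum hF (isTopSet_stackRank_insert_insert U y x))
  rw [hdiff, ← sum_update_thresholdProfile_sub (fun S => F S x)]
  refine sum_congr rfl fun i _ => ?_
  rw [← hsp.curv_maxProb hF i _ hxy hx]
  refine hsp.curv_maxProb_congr hF hxy hx hy fun j _ => ?_
  unfold thresholdProfile
  split_ifs
  · simp only [stackRank_lt hxy hx hy, stackRank_lt hxy hx₀ hy₀]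
  · simp only [(stackRank_lt hxy.symm hy hx).not_gt, (stackRank_lt hxy.symm hy₀ hx₀).not_gt]

end Strategyproof

/-- The least curvature at `∅` of voter `i`'s set functions `maxProb F i R`, over all reports of
the other voters. -/
def minCurv (F : Profile n m → Fin m → ℝ) (i : Fin n) (x y : Fin m) : ℝ :=
  ⨅ R : Profile n m, curv ∅ x y (maxProb F i R)

lemma minCurv_comm (F : Profile n m → Fin m → ℝ) (i : Fin n) (x y : Fin m) :
    minCurv F i x y = minCurv F i y x := by
  simp only [minCurv, curv_comm ∅ x y]

lemma minCurv_le (F : Profile n m → Fin m → ℝ) (i : Fin n) (x y : Fin m) (R : Profile n m) :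
    minCurv F i x y ≤ curv ∅ x y (maxProb F i R) :=
  ciInf_le (Set.finite_range _).bddBelow R

lemma exists_curv_eq_minCurv (F : Profile n m → Fin m → ℝ) (i : Fin n) (x y : Fin m) :
    ∃ R, curv ∅ x y (maxProb F i R) = minCurv F i x y :=
  exists_eq_ciInf_of_finite

/-- The part of `F` contributed by voter `i` alone: a set function with the curvature of
`maxProb F i R`, lowered in each pair of directions `x`, `y` by a constant so that it becomes
`minCurv F i x y` at `∅`. The reference profile in the definition is immaterial for the curvature,
see `Strategyproof.curv_unilateralPart`. -/
def unilateralPart (F : Profile n m → Fin m → ℝ) (i : Fin n) : Finset (Fin m) → ℝ :=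
  maxProb F i (fun _ => 1) -
    quadSetFun fun x y => curv ∅ x y (maxProb F i fun _ => 1) - minCurv F i x y

lemma unilateralPart_empty (F : Profile n m → Fin m → ℝ) (i : Fin n) :
    unilateralPart F i ∅ = 0 := by
  simp [unilateralPart, maxProb_empty, quadSetFun]

namespace Strategyproof

lemma minCurv_nonneg (hsp : Strategyproof F) (hF : IsSDS F) (i : Fin n) (hxy : x ≠ y) :
    0 ≤ minCurv F i x y :=
  le_ciInf fun R => hsp.submodular_maxProb hF i R hxy (notMem_empty x) (notMem_empty y)

lemma curv_unilateralPart (hsp : Strategyproof F) (hF : IsSDS F) (i : Fin n) (R : Profile n m)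
    (hxy : x ≠ y) (hx : x ∉ U) (hy : y ∉ U) :
    curv U x y (unilateralPart F i) =
      curv U x y (maxProb F i R) - (curv ∅ x y (maxProb F i R) - minCurv F i x y) := by
  rw [unilateralPart, map_sub, curv_quadSetFun (fun a b => by rw [curv_comm, minCurv_comm])
    hxy hx hy]
  linarith [hsp.curv_maxProb_sub_curv_empty_eq hF i (fun _ => 1) R hxy hx hy]

lemma curv_empty_unilateralPart (hsp : Strategyproof F) (hF : IsSDS F) (i : Fin n) (hxy : x ≠ y) :
    curv ∅ x y (unilateralPart F i) = minCurv F i x y := by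
  rw [hsp.curv_unilateralPart hF i (fun _ => 1) hxy (notMem_empty x) (notMem_empty y),
    sub_sub_cancel]

lemma submodular_unilateralPart (hsp : Strategyproof F) (hF : IsSDS F) (i : Fin n) :
    Submodular (unilateralPart F i) := by
  intro U x y hxy hx hy
  obtain ⟨R, hR⟩ := exists_curv_eq_minCurv F i x y
  rw [hsp.curv_unilateralPart hF i R hxy hx hy, hR, sub_self, sub_zero]
  exact hsp.submodular_maxProb hF i R hxy hx hy

lemma sum_minCurv_le_curv_unanimousProb (hsp : Strategyproof F) (hF : IsSDS F) (hxy : x ≠ y) :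
    ∑ i, minCurv F i x y ≤ curv ∅ x y (unanimousProb F) := by
  rw [hsp.curv_unanimousProb hF hxy (notMem_empty x) (notMem_empty y)]
  exact sum_le_sum fun i _ => minCurv_le F i x y _

lemma curv_unanimousProb_eq_sum_curv_unilateralPart (hsp : Strategyproof F) (hF : IsSDS F)
    (hxy : x ≠ y) (hx : x ∉ U) (hy : y ∉ U) :
    curv U x y (unanimousProb F) = ∑ i, curv U x y (unilateralPart F i) +
      (curv ∅ x y (unanimousProb F) - ∑ i, minCurv F i x y) := by
  rw [hsp.curv_unanimousProb hF hxy hx hy,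
    hsp.curv_unanimousProb hF hxy (notMem_empty x) (notMem_empty y), ← sum_sub_distrib,
    ← sum_add_distrib]
  refine sum_congr rfl fun i _ => ?_
  rw [hsp.curv_unilateralPart hF i _ hxy hx hy, sub_add_cancel]

lemma sum_pairSurplus_unilateralPart_le (hsp : Strategyproof F) (hF : IsSDS F) (hm : 3 ≤ m) :
    ∑ i, pairSurplus (unilateralPart F i) ≤ pairSurplus (unanimousProb F) := by
  set D : Fin m → Fin m → ℝ :=
    fun x y => curv ∅ x y (unanimousProb F) - ∑ i, minCurv F i x y with hD
  have hDcomm (x y : Fin m) : D x y = D y x := by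
    simp only [hD, curv_comm ∅ x y, minCurv_comm F _ x y]
  have hduples : 0 ≤ pairSurplus (quadSetFun D) :=
    pairSurplus_quadSetFun_nonneg (by simpa using hm) hDcomm fun x y hxy =>
      sub_nonneg.2 (hsp.sum_minCurv_le_curv_unanimousProb hF hxy)
  have hsplit : pairSurplus (unanimousProb F) =
      pairSurplus (∑ i, unilateralPart F i + quadSetFun D) := by
    refine pairSurplus_congr (unanimousProb_empty F)
      (by simp [unilateralPart_empty, quadSetFun]) fun U x y hxy hx hy => ?_
    rw [map_add, map_sum, curv_quadSetFun hDcomm hxy hx hy]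
    exact hsp.curv_unanimousProb_eq_sum_curv_unilateralPart hF hxy hx hy
  rw [hsplit, map_add, map_sum]
  exact le_add_of_nonneg_right hduples

end Strategyproof

lemma dictProb_eq_ite {t : Fin m} (ht : IsTopSet (R i) {t}) (x : Fin m) :
    dictProb R i x = if x = t then 1 else 0 := by
  refine if_congr (isTopSet_singleton_iff.symm.trans ⟨fun hx => ?_, fun hx => hx ▸ ht⟩) rfl rfl
  by_contra hne
  exact (ht t (mem_singleton_self t) x (by simpa using hne)).not_gt
    (hx x (mem_singleton_self x) t (by simpa using Ne.symm hne))

lemma sum_dictProb {t : Fin m} (ht : IsTopSet (R i) {t}) (V : Finset (Fin m)) :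
    ∑ a ∈ V, dictProb R i a = if t ∈ V then 1 else 0 := by
  simp only [dictProb_eq_ite ht, sum_ite_eq']

lemma isRandDict_dictProb (i : Fin n) :
    IsRandDict fun (R : Profile n m) x => dictProb R i x :=
  ⟨fun j => if j = i then 1 else 0, fun j => by positivity, by simp, fun R x => by simp⟩

namespace Strategyproof

/-- Submodularity turns the curvature between two top choices into the loss of probability of a
whole top set `V` when the report switches to a top choice outside `V`. -/
lemma sum_update_add_curv_le_sum_update (hsp : Strategyproof F) (hF : IsSDS F) (i : Fin n)
    (R : Profile n m) (hσ : IsTopSet σ V) (hτ : IsTopSet τ {y}) (hx : x ∈ V) (hy : y ∉ V) :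
    ∑ a ∈ V, F (update R i τ) a + curv ∅ x y (maxProb F i R) ≤ ∑ a ∈ V, F (update R i σ) a := by
  have hreport := hsp.sum_update_le_maxProb hF i R τ (insert y V)
  have hmarginal := (hsp.submodular_maxProb hF i R).marginal_anti (singleton_subset_iff.2 hx) hy
  have hsingle := hsp.maxProb_eq_sum_update hF i R hτ
  rw [sum_insert hy] at hreport
  rw [sum_singleton] at hsingle
  rw [pair_comm] at hmarginal
  rw [curv_empty_apply (maxProb_empty F i R), ← hsp.maxProb_eq_sum_update hF i R hσ]
  linarith

variable {γ : ℝ}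

lemma sum_add_mul_dictProb_le (hsp : Strategyproof F) (hF : IsSDS F)
    (hγ : ∀ R x y, x ≠ y → γ ≤ curv ∅ x y (maxProb F i R)) (R : Profile n m)
    (τ : Equiv.Perm (Fin m)) (hV : IsTopSet (R i) V) :
    ∑ a ∈ V, F (update R i τ) a + γ * ∑ a ∈ V, dictProb R i a ≤
      ∑ a ∈ V, F R a + γ * ∑ a ∈ V, dictProb (update R i τ) i a := by
  rcases V.eq_empty_or_nonempty with rfl | ⟨a, ha⟩
  · simp
  have : Nonempty (Fin m) := ⟨a⟩
  obtain ⟨t, ht⟩ := exists_isTopSet_singleton (R i)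
  obtain ⟨t', ht'⟩ := exists_isTopSet_singleton τ
  have htV : t ∈ V := by
    by_contra htV
    exact (isTopSet_singleton_iff.1 ht a).not_gt (hV a ha t htV)
  rw [sum_dictProb ht, if_pos htV, sum_dictProb (t := t') (by rwa [update_self])]
  split_ifs with ht'V
  · simpa using hsp.sum_update_le_sum_update hF hV R i τ
  · have htt' : t ≠ t' := fun h => ht'V (h ▸ htV)
    have hloss := hsp.sum_update_add_curv_le_sum_update hF i R hV ht' htV ht'V
    rw [update_eq_self] at hloss
    linarith [hγ R t t' htt']

lemma sub_mul_dictProb (hsp : Strategyproof F) (hF : IsSDS F)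
    (hγ : ∀ R x y, x ≠ y → γ ≤ curv ∅ x y (maxProb F i R)) :
    Strategyproof fun R a => F R a - γ * dictProb R i a := by
  intro R R' j hR b
  simp only [sum_sub_distrib, ← mul_sum]
  rcases eq_or_ne j i with rfl | hji
  · have hR' : update R j (R' j) = R' := by
      rw [update_eq_iff]
      exact ⟨rfl, hR⟩
    have hle := hsp.sum_add_mul_dictProb_le hF hγ R (R' j) (isTopSet_filter_lt (R j) b)
    rw [hR'] at hle
    linarith
  · have hdict (a : Fin m) : dictProb R i a = dictProb R' i a := by
      simp only [dictProb, hR i hji.symm]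
    simp only [hdict]
    linarith [hsp R R' j hR b]

lemma const_mul (hsp : Strategyproof F) {c : ℝ} (hc : 0 ≤ c) :
    Strategyproof fun R a => c * F R a := fun R R' i hR x => by
  simpa only [← mul_sum] using mul_le_mul_of_nonneg_left (hsp R R' i hR x) hc

lemma mul_dictProb_le [Nontrivial (Fin m)] (hsp : Strategyproof F) (hF : IsSDS F)
    (hγ : ∀ R x y, x ≠ y → γ ≤ curv ∅ x y (maxProb F i R)) (R : Profile n m) (x : Fin m) :
    γ * dictProb R i x ≤ F R x := by
  by_cases htop : ∀ a, R i x ≤ R i a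
  · obtain ⟨y, hyx⟩ := exists_ne x
    have hle := hsp.sum_update_add_curv_le_sum_update hF i R (isTopSet_singleton_iff.2 htop)
      (isTopSet_topRank {y}) (mem_singleton_self x) (by simpa using hyx)
    rw [update_eq_self, sum_singleton, sum_singleton] at hle
    rw [dictProb, if_pos htop, mul_one]
    linarith [hγ R x y hyx.symm, hF.1 (update R i (topRank {y})) x]
  · rw [dictProb, if_neg htop, mul_zero]
    exact hF.1 R x

lemma decomposesAt_of_le_curv [Nontrivial (Fin m)] (hsp : Strategyproof F) (hF : IsSDS F)
    (hγ : ∀ R x y, x ≠ y → γ ≤ curv ∅ x y (maxProb F i R)) (hγ_lt : γ < 1) :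
    DecomposesAt F γ := by
  have hpos : 0 < 1 - γ := sub_pos.2 hγ_lt
  refine ⟨fun R x => dictProb R i x, fun R x => (1 - γ)⁻¹ * (F R x - γ * dictProb R i x),
    isRandDict_dictProb i, ⟨fun R x => ?_, fun R => ?_⟩,
    (hsp.sub_mul_dictProb hF hγ).const_mul (inv_nonneg.2 hpos.le), fun R x => ?_⟩
  · exact mul_nonneg (inv_nonneg.2 hpos.le) (sub_nonneg.2 (hsp.mul_dictProb_le hF hγ R x))
  · obtain ⟨t, ht⟩ := exists_isTopSet_singleton (R i)
    rw [← mul_sum, sum_sub_distrib, hF.2, ← mul_sum, sum_dictProb ht, if_pos (mem_univ t), mul_one,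
      inv_mul_cancel₀ hpos.ne']
  · rw [mul_inv_cancel_left₀ hpos.ne', add_sub_cancel]

lemma exists_minCurv_eq_zero [Nontrivial (Fin m)] (hsp : Strategyproof F) (hF : IsSDS F)
    (hrd : RandDictDegree F 0) (i : Fin n) : ∃ x y, x ≠ y ∧ minCurv F i x y = 0 := by
  obtain ⟨a, b, hab⟩ := exists_pair_ne (Fin m)
  obtain ⟨⟨x, y⟩, hxy, hmin⟩ := exists_min_image (univ : Finset (Fin m)).offDiag
    (fun p => minCurv F i p.1 p.2) ⟨(a, b), by simpa using hab⟩
  simp only [mem_offDiag, mem_univ, true_and, Prod.forall] at hxy hmin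
  refine ⟨x, y, hxy, (hsp.minCurv_nonneg hF i hxy).antisymm' ?_⟩
  set γ := min (minCurv F i x y) (1 / 2)
  have hdecomposes : DecomposesAt F γ :=
    hsp.decomposesAt_of_le_curv (i := i) hF (fun R a b hab => ((min_le_left _ _).trans
      (hmin a b hab)).trans (minCurv_le F i a b R)) ((min_le_right _ _).trans_lt (by norm_num))
  have hγ_nonpos : γ ≤ 0 := hrd.2.2.2 γ
    (le_min (hsp.minCurv_nonneg hF i hxy) (by norm_num))
    ((min_le_right _ _).trans (by norm_num)) hdecomposes
  exact (min_le_iff.1 hγ_nonpos).resolve_right (by norm_num)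

lemma pairSurplus_unilateralPart_nonneg [Nontrivial (Fin m)] (hsp : Strategyproof F)
    (hF : IsSDS F) (hrd : RandDictDegree F 0) (i : Fin n) :
    0 ≤ pairSurplus (unilateralPart F i) := by
  obtain ⟨x, y, hxy, hzero⟩ := hsp.exists_minCurv_eq_zero hF hrd i
  refine (hsp.submodular_unilateralPart hF i).pairSurplus_nonneg_of_eq_add hxy ?_
  have hcurv := hsp.curv_empty_unilateralPart hF i hxy
  rw [curv_empty_apply (unilateralPart_empty F i), hzero] at hcurv
  linarith

end Strategyproof

end StrategyproofSchemes

/-- For `m ≥ 3`, no strategyproof `0`-randomly dictatorial SDS is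
`β`-ex post efficient for any `β < 1/m`: some Pareto-dominated alternative
receives probability at least `1/m` in some profile. -/
theorem zeroRandDict_not_expost (n m : ℕ) (hm : 3 ≤ m)
    (F : Profile n m → Fin m → ℝ) (hF : IsSDS F) (hsp : Strategyproof F)
    (hrd : RandDictDegree F 0) :
    ∃ (R : Profile n m) (x : Fin m),
      ParetoDominated R x ∧ 1 / (m : ℝ) ≤ F R x := by
  have : Nontrivial (Fin m) := Fin.nontrivial_iff_two_le.2 (by omega)
  have hsurplus : 0 ≤ pairSurplus (unanimousProb F) :=
    (sum_nonneg fun i _ => hsp.pairSurplus_unilateralPart_nonneg hF hrd i).trans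
      (hsp.sum_pairSurplus_unilateralPart_le hF hm)
  obtain ⟨x, y, hxy, hle⟩ := exists_div_card_le_of_pairSurplus_nonneg hsurplus
  rw [unanimousProb_univ hF, Fintype.card_fin, hsp.unanimousProb_pair_sub hF hxy] at hle
  exact ⟨fun _ => stackRank ∅ x y, y,
    ⟨x, fun _ => stackRank_lt hxy (notMem_empty x) (notMem_empty y)⟩, hle⟩
end
end

section
/- Let m ≥ 3. No SDS that can be represented as a convex combination of duples is β-ex post efficient for any β < 1/m; that is, for every SDS f of the form f = ∑_k λ_k f_k with λ_k ≥ 0, ∑_k λ_k = 1, and each f_k a duple, there exist a profile R and an alternative x that is Pareto-dominated in R such that f(R,x) ≥ 1/m. -/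
open Finset

noncomputable section

/-!
Index the alternatives cyclically and let `P x` be the unanimous profile ranking `x + 1` first and
`x` second, so that `x` is Pareto-dominated in `P x`. As `m ≥ 3`, any two alternatives `a ≠ b`
satisfy `b ≠ a + 1` or `a ≠ b + 1`; say the former, so that every voter prefers `a` to `b` in `P a`.
A duple `g` on `{a, b}` then gives `a` its maximal probability in `P a`, whence
`g (P a) a + g (P b) b ≥ g (P b) a + g (P b) b = 1`. Thus `∑ x, g (P x) x ≥ 1` for every duple,
hence for every mixture of duples, and one of the `m` terms is at least `1 / m`.
-/

section Duples

variable {n m : ℕ} {g : Profile n m → Fin m → ℝ} {a b : Fin m}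

lemma IsSDS.apply_eq_one (hg : IsSDS g) {R : Profile n m} (hsupp : ∀ z, z ≠ a → g R z = 0) :
    g R a = 1 :=
  (Fintype.sum_eq_single a hsupp).symm.trans (hg.2 R)

lemma IsSDS.apply_add_apply_eq_one (hg : IsSDS g) (hab : a ≠ b) {R : Profile n m}
    (hsupp : ∀ z, z ≠ a → z ≠ b → g R z = 0) : g R a + g R b = 1 :=
  (Fintype.sum_eq_add a b hab fun z hz ↦ hsupp z hz.1 hz.2).symm.trans (hg.2 R)

lemma SDPref.apply_le_of_supp_pair {R : Profile n m} {i : Fin n} {p q : Fin m → ℝ}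
    (hpq : SDPref R i p q) (hp : ∀ z, z ≠ a → z ≠ b → p z = 0)
    (hq : ∀ z, z ≠ a → z ≠ b → q z = 0) (hab : R i a < R i b) : q a ≤ p a := by
  have sum_above_b (l : Fin m → ℝ) (hl : ∀ z, z ≠ a → z ≠ b → l z = 0) :
      ∑ y with R i y < R i b, l y = l a := by
    refine sum_eq_single_of_mem a (by simpa using hab) fun z hz hza ↦ hl z hza ?_
    rintro rfl
    simp at hz
  simpa only [sum_above_b p hp, sum_above_b q hq] using hpq b

lemma Strategyproof.apply_le_update_of_supp_pair (hg : Strategyproof g)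
    (hsupp : ∀ R z, z ≠ a → z ≠ b → g R z = 0) (R : Profile n m) (i : Fin n)
    {r : Equiv.Perm (Fin m)} (hr : r a < r b) : g R a ≤ g (Function.update R i r) a :=
  (hg (Function.update R i r) R i fun _ hj ↦ Function.update_of_ne hj _ _).apply_le_of_supp_pair
    (hsupp _) (hsupp _) (by simpa using hr)

lemma Strategyproof.apply_le_of_unanimous (hg : Strategyproof g)
    (hsupp : ∀ R z, z ≠ a → z ≠ b → g R z = 0) {R : Profile n m} (R' : Profile n m)
    (hR : ∀ i, R i a < R i b) : g R' a ≤ g R a := by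
  have le_piecewise (S : Finset (Fin n)) : g R' a ≤ g (S.piecewise R R') a := by
    induction S using Finset.induction_on with
    | empty => rw [piecewise_empty]
    | insert i S _ ih =>
      rw [piecewise_insert]
      exact ih.trans (hg.apply_le_update_of_supp_pair hsupp _ i (hR i))
  simpa only [piecewise_univ] using le_piecewise univ

lemma IsDuple.one_le_sum (hg : IsDuple g) (P : Fin m → Profile n m)
    (hP : ∀ a b, a ≠ b → (∀ i, P a i a < P a i b) ∨ ∀ i, P b i b < P b i a) :
    1 ≤ ∑ x, g (P x) x := by
  obtain ⟨hsds, hsp, a, b, hsupp⟩ := hg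
  have hnonneg (x : Fin m) : 0 ≤ g (P x) x := hsds.1 _ _
  rcases eq_or_ne a b with rfl | hab
  · calc
      1 = g (P a) a := (hsds.apply_eq_one fun z hz ↦ hsupp _ z hz hz).symm
      _ ≤ ∑ x, g (P x) x := single_le_sum (fun x _ ↦ hnonneg x) (mem_univ a)
  have hsupp_symm : ∀ R z, z ≠ b → z ≠ a → g R z = 0 := fun R z hb ha ↦ hsupp R z ha hb
  have hpair : 1 ≤ g (P a) a + g (P b) b := by
    rcases hP a b hab with ha | hb
    · rw [← hsds.apply_add_apply_eq_one hab (hsupp (P b))]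
      gcongr
      exact hsp.apply_le_of_unanimous hsupp (P b) ha
    · rw [← hsds.apply_add_apply_eq_one hab (hsupp (P a))]
      gcongr
      exact hsp.apply_le_of_unanimous hsupp_symm (P a) hb
  calc
    1 ≤ ∑ x ∈ {a, b}, g (P x) x := by rwa [sum_pair hab]
    _ ≤ ∑ x, g (P x) x :=
      sum_le_sum_of_subset_of_nonneg (subset_univ _) fun x _ _ ↦ hnonneg x

end Duples

lemma MixOf.le_sum {n m : ℕ} {Q : (Profile n m → Fin m → ℝ) → Prop}
    {F : Profile n m → Fin m → ℝ} (hF : MixOf Q F) {ι : Type*} (s : Finset ι)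
    (P : ι → Profile n m) (x : ι → Fin m) {c : ℝ}
    (hQ : ∀ g, Q g → c ≤ ∑ j ∈ s, g (P j) (x j)) : c ≤ ∑ j ∈ s, F (P j) (x j) := by
  obtain ⟨K, w, g, hw, hw_sum, hg, hFg⟩ := hF
  calc
    c = ∑ k, w k * c := by rw [← sum_mul, hw_sum, one_mul]
    _ ≤ ∑ k, w k * ∑ j ∈ s, g k (P j) (x j) :=
      sum_le_sum fun k _ ↦ mul_le_mul_of_nonneg_left (hQ _ (hg k)) (hw k)
    _ = ∑ j ∈ s, F (P j) (x j) := by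
      simp only [hFg, mul_sum]
      exact sum_comm

section CyclicProfile

variable {n m : ℕ} [NeZero m]

/-- The unanimous profile in which every voter has the preferences
`x + 1 ≻ x ≻ x - 1 ≻ ⋯ ≻ x + 2`, with arithmetic modulo `m`: the rank of `z` is `x + 1 - z`. -/
def cyclicProfile (n : ℕ) (x : Fin m) : Profile n m :=
  fun _ ↦ Equiv.subLeft (x + 1)

lemma paretoDominated_cyclicProfile (hm : 2 ≤ m) (x : Fin m) :
    ParetoDominated (cyclicProfile n x) x := by
  refine ⟨x + 1, fun i ↦ ?_⟩
  simp only [cyclicProfile, Equiv.subLeft_apply, sub_self, add_sub_cancel_left]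
  simp [Fin.lt_def, Nat.mod_eq_of_lt hm]

lemma cyclicProfile_lt {x y : Fin m} (hyx : y ≠ x) (hy_succ : y ≠ x + 1) (i : Fin n) :
    cyclicProfile n x i x < cyclicProfile n x i y := by
  simp only [cyclicProfile, Equiv.subLeft_apply, add_sub_cancel_left]
  refine lt_of_le_of_ne (Fin.one_le_of_ne_zero (sub_ne_zero.2 hy_succ.symm)) fun h ↦ hyx ?_
  rwa [eq_sub_iff_add_eq, add_comm, add_left_inj] at h

lemma fin_add_one_add_one_ne_self (hm : 3 ≤ m) (x : Fin m) : x + 1 + 1 ≠ x := by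
  rw [add_assoc, Ne, add_eq_left, Fin.ext_iff, Fin.val_add, Fin.val_one',
    Nat.mod_eq_of_lt (by omega : 1 < m), Nat.mod_eq_of_lt (by omega : 1 + 1 < m)]
  simp

lemma cyclicProfile_lt_or_lt (hm : 3 ≤ m) {a b : Fin m} (hab : a ≠ b) :
    (∀ i, cyclicProfile n a i a < cyclicProfile n a i b) ∨
      ∀ i, cyclicProfile n b i b < cyclicProfile n b i a := by
  rcases ne_or_eq b (a + 1) with hb | rfl
  · exact .inl (cyclicProfile_lt hab.symm hb)
  · exact .inr (cyclicProfile_lt hab (fin_add_one_add_one_ne_self hm a).symm)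

end CyclicProfile

/-- For `m ≥ 3`, no convex combination of duples is `β`-ex post
efficient for any `β < 1/m`: some Pareto-dominated alternative receives
probability at least `1/m` in some profile. -/
theorem dupleMix_not_expost (n m : ℕ) (hm : 3 ≤ m)
    (F : Profile n m → Fin m → ℝ) (hmix : MixOf IsDuple F) :
    ∃ (R : Profile n m) (x : Fin m),
      ParetoDominated R x ∧ 1 / (m : ℝ) ≤ F R x := by
  have : NeZero m := ⟨by omega⟩
  have hsum : 1 ≤ ∑ x, F (cyclicProfile n x) x :=
    hmix.le_sum univ (cyclicProfile n) id fun _ hg ↦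
      hg.one_le_sum (cyclicProfile n) fun _ _ ↦ cyclicProfile_lt_or_lt hm
  have hconst : ∑ _x : Fin m, 1 / (m : ℝ) = 1 := by simp [NeZero.ne m]
  obtain ⟨x, -, hx⟩ := exists_le_of_sum_le univ_nonempty (hconst.trans_le hsum)
  exact ⟨cyclicProfile n x, x, paretoDominated_cyclicProfile (by omega) x, hx⟩
end
end
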